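/- There exists a constant C > 0 such that for every n ≥ 1, ∑_{v∈ℤ^d} x_n(v)² ≤ C n^{−d}. (The squared ℓ² norm of the Jacobi polynomial iteration is O(n^{−d}).) -/

import Mathlib

open MeasureTheory Matrix Filter Topology Real

noncomputable section

def latticeConv {d : ℕ} (ω x : (Fin d → ℤ) → ℝ) : (Fin d → ℤ) → ℝ :=
  fun v => ∑' η : Fin d → ℤ, ω (v - η) * x η

def covQ (d : ℕ) (ω : (Fin d → ℤ) → ℝ) : Matrix (Fin d) (Fin d) ℝ :=
  Matrix.of fun i j => ∑' v : Fin d → ℤ, ω v * (v i : ℝ) * (v j : ℝ)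

def ftOmega {d : ℕ} (ω : (Fin d → ℤ) → ℝ) (ξ : Fin d → ℝ) : ℂ :=
  ∑' v : Fin d → ℤ, (ω v : ℂ) * Complex.exp (Complex.I * ((∑ i, ξ i * (v i : ℝ) : ℝ) : ℂ))

def aCoef0 (d : ℕ) : ℝ := ((d : ℝ) + 4) / (2 * (2 + (d : ℝ)))
def bCoef0 (d : ℕ) : ℝ := (d : ℝ) / (2 * (2 + (d : ℝ)))
def aCoef (d n : ℕ) : ℝ :=
  (2 * (n : ℝ) + (d : ℝ)/2 + 1) * (2 * (n : ℝ) + (d : ℝ)/2 + 2) / (2 * ((n : ℝ) + 1 + (d : ℝ)/2)^2)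
def bCoef (d n : ℕ) : ℝ :=
  (d : ℝ)^2 * (2 * (n : ℝ) + (d : ℝ)/2 + 1) / (8 * ((n : ℝ) + 1 + (d : ℝ)/2)^2 * (2 * (n : ℝ) + (d : ℝ)/2))
def cCoef (d n : ℕ) : ℝ :=
  (n : ℝ)^2 * (2 * (n : ℝ) + (d : ℝ)/2 + 2) / (((n : ℝ) + 1 + (d : ℝ)/2)^2 * (2 * (n : ℝ) + (d : ℝ)/2))

def besselJ (ν z : ℝ) : ℝ :=
  ∑' m : ℕ, ((-1 : ℝ)^m / ((m.factorial : ℝ) * Real.Gamma ((m : ℝ) + ν + 1))) * (z / 2) ^ (2 * (m : ℝ) + ν)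

def jacobiP (α β : ℝ) (n : ℕ) (x : ℝ) : ℝ :=
  ∑ s ∈ Finset.range (n + 1),
    (Real.Gamma ((n : ℝ) + α + 1) / (Real.Gamma (α + (s : ℝ) + 1) * ((n - s).factorial : ℝ))) *
    (Real.Gamma ((n : ℝ) + β + 1) / (Real.Gamma ((n : ℝ) + β - (s : ℝ) + 1) * (s.factorial : ℝ))) *
    ((x - 1) / 2) ^ s * ((x + 1) / 2) ^ (n - s)

def jacobiPi (α β : ℝ) (n : ℕ) (x : ℝ) : ℝ := jacobiP α β n x / jacobiP α β n 1

def pd {d : ℕ} (j : Fin d) (g : (Fin d → ℝ) → ℝ) : (Fin d → ℝ) → ℝ :=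
  fun y => deriv (fun s => g (Function.update y j s)) (y j)

/-!
On the Fourier side the iteration is multiplication by a polynomial: `x̂_n = P_n(ω̂)`, where `P_n`
is the Jacobi polynomial `P_n^{(α,0)}`, `α = d/2`, normalised by `P_n(1) = 1`. By Parseval the
squared ℓ² norm is `(2π)^{-d} ∫ P_n(ω̂(ξ))² dξ` over `[-π, π]^d`.

Write the Jacobi equation in Liouville normal form `u'' + Φ u = 0` in the variable `θ`,
`t = cos θ`. The Sonin function `u² + u'² / Φ` is monotone in `t` as long as `n² (1 - t) ≥ α²`,
which propagates the elementary bound `|P_n| ≤ 1` on `[0, 1]` from the point `t = 1 - (α/n)²` to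
the left. The outcome is `P_n(t)² ≲ (1 + n √(1 - t))^{-(2α+1)}`, uniformly for `t` in
`[-1 + ε, 1]`. Aperiodicity keeps `ω̂` away from `-1`, and positive definiteness of the covariance
gives `1 - ω̂(ξ) ≳ ‖ξ‖²`, so the integrand is at most a multiple of `(1 + n b ‖ξ‖)^{-(d+1)}` with
`b > 0` fixed, whose integral scales like `n^{-d}`.
-/

section Jacobi

open Polynomial

/-- The Jacobi polynomial `P_n^{(α,0)}` normalised to take the value `1` at `1`, encoded by its
three-term recurrence. -/
def jacobiPoly (α : ℝ) : ℕ → ℝ[X]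
  | 0 => 1
  | 1 => C ((α + 2) / (2 * (α + 1))) * X + C (α / (2 * (α + 1)))
  | n + 2 =>
    let s : ℝ := 2 * (n + 1) + α
    (C ((s + 1) * (s + 2) / (2 * (n + 2 + α) ^ 2)) * X +
        C (α ^ 2 * (s + 1) / (2 * (n + 2 + α) ^ 2 * s))) * jacobiPoly α (n + 1) -
      C ((n + 1) ^ 2 * (s + 2) / ((n + 2 + α) ^ 2 * s)) * jacobiPoly α n

variable {α : ℝ}

theorem jacobiPoly_recurrence (hα : -1 < α) (n : ℕ) :
    2 * ((n : ℝ[X]) + C α + 2) ^ 2 * (2 * (n : ℝ[X]) + C α + 2) * jacobiPoly α (n + 2) =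
      (2 * (n : ℝ[X]) + C α + 3) *
          ((2 * (n : ℝ[X]) + C α + 2) * (2 * (n : ℝ[X]) + C α + 4) * X + C α ^ 2) *
          jacobiPoly α (n + 1) -
        2 * ((n : ℝ[X]) + 1) ^ 2 * (2 * (n : ℝ[X]) + C α + 4) * jacobiPoly α n := by
  have hs : 2 * ((n : ℝ) + 1) + α ≠ 0 := by linarith [n.cast_nonneg (α := ℝ)]
  have hn : (n : ℝ) + 2 + α ≠ 0 := by linarith [n.cast_nonneg (α := ℝ)]
  refine Polynomial.funext fun t => ?_
  simp only [jacobiPoly, eval_mul, eval_add, eval_sub, eval_pow, eval_C, eval_X, eval_natCast,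
    eval_ofNat, eval_one]
  field_simp
  ring

theorem derivative_jacobiPoly_recurrence (hα : -1 < α) (n : ℕ) :
    2 * ((n : ℝ[X]) + C α + 2) ^ 2 * (2 * (n : ℝ[X]) + C α + 2) *
        derivative (jacobiPoly α (n + 2)) =
      (2 * (n : ℝ[X]) + C α + 3) * (2 * (n : ℝ[X]) + C α + 2) * (2 * (n : ℝ[X]) + C α + 4) *
          jacobiPoly α (n + 1) +
        (2 * (n : ℝ[X]) + C α + 3) *
          ((2 * (n : ℝ[X]) + C α + 2) * (2 * (n : ℝ[X]) + C α + 4) * X + C α ^ 2) *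
          derivative (jacobiPoly α (n + 1)) -
        2 * ((n : ℝ[X]) + 1) ^ 2 * (2 * (n : ℝ[X]) + C α + 4) * derivative (jacobiPoly α n) := by
  have h := congrArg derivative (jacobiPoly_recurrence hα n)
  simp only [derivative_mul, derivative_add, derivative_sub, derivative_pow, derivative_C,
    derivative_X, derivative_natCast, derivative_ofNat, derivative_one] at h
  linear_combination h

theorem two_mul_natCast_add_C_add_two_ne_zero (hα : -1 < α) (n : ℕ) :
    (2 * (n : ℝ[X]) + C α + 2) ≠ 0 := fun h => by
  have := congrArg (eval 0) h
  simp only [eval_add, eval_mul, eval_ofNat, eval_natCast, eval_C, eval_zero] at this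
  linarith [n.cast_nonneg (α := ℝ)]

theorem jacobiPoly_structure (hα : -1 < α) (n : ℕ) :
    (2 * (n : ℝ[X]) + C α + 2) * (1 - X ^ 2) * derivative (jacobiPoly α n) =
      ((n : ℝ[X]) + C α + 1) * (C α + (2 * (n : ℝ[X]) + C α + 2) * X) * jacobiPoly α n -
        2 * ((n : ℝ[X]) + C α + 1) ^ 2 * jacobiPoly α (n + 1) ∧
    (2 * (n : ℝ[X]) + C α + 2) * (1 - X ^ 2) * derivative (jacobiPoly α (n + 1)) =
      ((n : ℝ[X]) + 1) * (C α - (2 * (n : ℝ[X]) + C α + 2) * X) * jacobiPoly α (n + 1) +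
        2 * ((n : ℝ[X]) + 1) ^ 2 * jacobiPoly α n := by
  induction n with
  | zero =>
    have h1 : α + 1 ≠ 0 := by linarith
    constructor <;> refine Polynomial.funext fun t => ?_ <;>
      simp only [jacobiPoly, derivative_mul, derivative_add, derivative_C, derivative_X,
        derivative_one, eval_mul, eval_add, eval_sub, eval_pow, eval_C, eval_X, eval_ofNat,
        eval_one, eval_zero, CharP.cast_eq_zero] <;>
      field_simp <;> ring
  | succ n ih =>
    obtain ⟨raise, lower⟩ := ih
    have hs := two_mul_natCast_add_C_add_two_ne_zero hα n
    have hn : (n : ℝ[X]) + C α + 2 ≠ 0 := fun h => by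
      have := congrArg (eval 0) h
      simp only [eval_add, eval_ofNat, eval_natCast, eval_C, eval_zero] at this
      linarith [n.cast_nonneg (α := ℝ)]
    have recur := jacobiPoly_recurrence hα n
    have recur' := derivative_jacobiPoly_recurrence hα n
    push_cast
    constructor
    · refine mul_left_cancel₀ hs ?_
      linear_combination (2 * (n : ℝ[X]) + C α + 4) * lower + recur
    · refine mul_left_cancel₀
        (mul_ne_zero hs (mul_ne_zero (mul_ne_zero two_ne_zero (pow_ne_zero 2 hn)) hs)) ?_
      linear_combination
        (2 * (n : ℝ[X]) + C α + 2) * (2 * (n : ℝ[X]) + C α + 4) * (1 - X ^ 2) * recur' +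
        (2 * (n : ℝ[X]) + C α + 3) * (2 * (n : ℝ[X]) + C α + 4) *
          ((2 * (n : ℝ[X]) + C α + 2) * (2 * (n : ℝ[X]) + C α + 4) * X + C α ^ 2) * lower -
        2 * ((n : ℝ[X]) + 1) ^ 2 * (2 * (n : ℝ[X]) + C α + 4) ^ 2 * raise -
        (2 * (n : ℝ[X]) + C α + 2) * ((n : ℝ[X]) + 2) *
          (C α - (2 * (n : ℝ[X]) + C α + 4) * X) * recur

theorem jacobiPoly_ode (hα : -1 < α) (n : ℕ) :
    (1 - X ^ 2) * derivative (derivative (jacobiPoly α n)) =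
      (C α + (C α + 2) * X) * derivative (jacobiPoly α n) -
        (n : ℝ[X]) * ((n : ℝ[X]) + C α + 1) * jacobiPoly α n := by
  obtain ⟨raise, lower⟩ := jacobiPoly_structure hα n
  have raise' := congrArg derivative raise
  simp only [derivative_mul, derivative_add, derivative_sub, derivative_pow, derivative_C,
    derivative_X, derivative_natCast, derivative_ofNat, derivative_one, Nat.cast_ofNat,
    map_ofNat] at raise'
  have hs := two_mul_natCast_add_C_add_two_ne_zero hα n
  have hX : (1 - X ^ 2 : ℝ[X]) ≠ 0 := fun h => by simpa using congrArg (eval 0) h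
  refine mul_left_cancel₀ (mul_ne_zero hs (mul_ne_zero hs hX)) ?_
  push_cast at raise'
  linear_combination (2 * (n : ℝ[X]) + C α + 2) * (1 - X ^ 2) * raise' -
    2 * ((n : ℝ[X]) + C α + 1) ^ 2 * lower +
    (((n : ℝ[X]) + C α + 1) * (C α + (2 * (n : ℝ[X]) + C α + 2) * X) -
      (2 * (n : ℝ[X]) + C α + 2) * (C α + C α * X)) * raise

theorem eval_one_jacobiPoly (hα : -1 < α) (n : ℕ) : (jacobiPoly α n).eval 1 = 1 := by
  induction n with
  | zero => exact eval_one
  | succ n ih =>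
    have raise := congrArg (eval 1) (jacobiPoly_structure hα n).1
    simp only [eval_mul, eval_add, eval_sub, eval_pow, eval_C, eval_X, eval_natCast, eval_ofNat,
      eval_one, ih] at raise
    have hn : (2 * ((n : ℝ) + α + 1) ^ 2) ≠ 0 := by
      have : (n : ℝ) + α + 1 ≠ 0 := by linarith [n.cast_nonneg (α := ℝ)]
      positivity
    refine mul_left_cancel₀ hn ?_
    linear_combination raise

theorem sq_eval_add_sq_eval_derivative_jacobiPoly_le (hα : 0 ≤ α) (n : ℕ) {t : ℝ}
    (ht : t ∈ Set.Icc (0 : ℝ) 1) :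
    n * (n + α + 1) * (jacobiPoly α n).eval t ^ 2 +
        (1 - t ^ 2) * (derivative (jacobiPoly α n)).eval t ^ 2 ≤ n * (n + α + 1) := by
  set P := jacobiPoly α n with hP
  set S : ℝ[X] := (n : ℝ[X]) * ((n : ℝ[X]) + C α + 1) * P ^ 2 +
    (1 - X ^ 2) * derivative P ^ 2 with hS
  have derivative_S : derivative S = 2 * (C α + (C α + 1) * X) * derivative P ^ 2 := by
    have ode := jacobiPoly_ode (by linarith : -1 < α) n
    simp only [hS, derivative_mul, derivative_add, derivative_sub, derivative_pow, derivative_C,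
      derivative_X, derivative_natCast, derivative_one, Nat.cast_ofNat, map_ofNat]
    linear_combination 2 * derivative P * ode
  have mono : MonotoneOn (fun s => S.eval s) (Set.Icc 0 1) := by
    refine monotoneOn_of_deriv_nonneg (convex_Icc 0 1) S.continuousOn S.differentiableOn ?_
    intro s hs
    rw [interior_Icc] at hs
    rw [Polynomial.deriv, derivative_S]
    simp only [eval_mul, eval_add, eval_pow, eval_C, eval_X, eval_ofNat, eval_one]
    have := hs.1.le
    positivity
  have := mono ht (Set.right_mem_Icc.2 zero_le_one) ht.2
  simpa [hS, hP, eval_one_jacobiPoly (by linarith : -1 < α) n] using this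

theorem sq_eval_jacobiPoly_le_one (hα : 0 ≤ α) (n : ℕ) {t : ℝ} (ht : t ∈ Set.Icc (0 : ℝ) 1) :
    (jacobiPoly α n).eval t ^ 2 ≤ 1 := by
  rcases n.eq_zero_or_pos with rfl | hn
  · simp [jacobiPoly]
  have hn : (0 : ℝ) < n * (n + α + 1) := by positivity
  have ht2 : 0 ≤ 1 - t ^ 2 := by nlinarith [ht.1, ht.2]
  nlinarith [sq_eval_add_sq_eval_derivative_jacobiPoly_le hα n ht,
    mul_nonneg ht2 (sq_nonneg ((derivative (jacobiPoly α n)).eval t))]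

theorem one_sub_sq_mul_sq_eval_derivative_jacobiPoly_le (hα : 0 ≤ α) (n : ℕ) {t : ℝ}
    (ht : t ∈ Set.Icc (0 : ℝ) 1) :
    (1 - t ^ 2) * (derivative (jacobiPoly α n)).eval t ^ 2 ≤ n * (n + α + 1) := by
  have := sq_eval_add_sq_eval_derivative_jacobiPoly_le hα n ht
  have : 0 ≤ n * (n + α + 1) * (jacobiPoly α n).eval t ^ 2 := by positivity
  linarith

/-- The weight `w` for which `u(θ) = w(t)^{1/2} P_n^{(α,0)}(t)`, `t = cos θ`, satisfies an equation
`u'' + Φ u = 0` without first-order term (the Liouville normal form of the Jacobi equation). -/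
def liouvilleWeight (α t : ℝ) : ℝ := (1 - t) ^ (α + 1 / 2) * √(1 + t)

/-- The potential `Φ` of the Liouville normal form of the Jacobi equation, multiplied by
`sin² θ = 1 - t²`, as a function of `t = cos θ`. -/
def liouvillePotential (α : ℝ) (n : ℕ) (t : ℝ) : ℝ :=
  (1 / 4 - α ^ 2) * (1 + t) / 2 + (1 - t) / 8 + (n + (α + 1) / 2) ^ 2 * (1 - t ^ 2)

/-- The quantity `-w(t)^{-1/2} sin θ u'(θ)`, where `u` is the solution of the Liouville normal form
of the Jacobi equation given by `P_n^{(α,0)}` and `t = cos θ`. -/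
def liouvilleMomentum (α : ℝ) (n : ℕ) (t : ℝ) : ℝ :=
  (1 - t ^ 2) * (derivative (jacobiPoly α n)).eval t -
    (α + (α + 1) * t) / 2 * (jacobiPoly α n).eval t

/-- The Sonin function `u² + u'² / Φ` of the Liouville normal form of the Jacobi equation, as a
function of `t = cos θ`. -/
def soninFunction (α : ℝ) (n : ℕ) (t : ℝ) : ℝ :=
  liouvilleWeight α t *
    ((jacobiPoly α n).eval t ^ 2 + liouvilleMomentum α n t ^ 2 / liouvillePotential α n t)

theorem liouvilleWeight_nonneg {t : ℝ} (ht : t ≤ 1) : 0 ≤ liouvilleWeight α t :=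
  mul_nonneg (rpow_nonneg (sub_nonneg.2 ht) _) (sqrt_nonneg _)

theorem hasDerivAt_liouvilleWeight {t : ℝ} (ht : t ∈ Set.Ioo (-1 : ℝ) 1) :
    HasDerivAt (liouvilleWeight α)
      (-(α + (α + 1) * t) * liouvilleWeight α t / (1 - t ^ 2)) t := by
  have h1 : 0 < 1 - t := by linarith [ht.2]
  have h2 : 0 < 1 + t := by linarith [ht.1]
  have power := ((hasDerivAt_id t).const_sub 1).rpow_const (p := α + 1 / 2) (.inl h1.ne')
  have root := ((hasDerivAt_id t).const_add 1).sqrt h2.ne'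
  refine (power.mul root).congr_deriv ?_
  have hsq : √(1 + t) ^ 2 = 1 + t := sq_sqrt h2.le
  simp only [id_eq, liouvilleWeight, rpow_sub_one h1.ne',
    show 1 - t ^ 2 = (1 - t) * (1 + t) by ring]
  field_simp
  rw [hsq]
  ring

theorem hasDerivAt_one_sub_sq (t : ℝ) : HasDerivAt (fun s : ℝ => 1 - s ^ 2) (-(2 * t)) t := by
  simpa using ((hasDerivAt_id t).pow 2).const_sub 1

theorem hasDerivAt_liouvillePotential (n : ℕ) (t : ℝ) :
    HasDerivAt (liouvillePotential α n)
      ((1 / 4 - α ^ 2) / 2 - 1 / 8 - 2 * (n + (α + 1) / 2) ^ 2 * t) t := by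
  have h1 := (((hasDerivAt_id t).const_add 1).const_mul (1 / 4 - α ^ 2)).div_const 2
  have h2 := ((hasDerivAt_id t).const_sub 1).div_const 8
  have h3 := (hasDerivAt_one_sub_sq t).const_mul (((n : ℝ) + (α + 1) / 2) ^ 2)
  exact ((h1.add h2).add h3).congr_deriv (by ring)

theorem hasDerivAt_liouvilleMomentum (hα : -1 < α) (n : ℕ) {t : ℝ} (ht : 1 - t ^ 2 ≠ 0) :
    HasDerivAt (liouvilleMomentum α n)
      ((((α + (α + 1) * t) / 2 - t) * liouvilleMomentum α n t -
        liouvillePotential α n t * (jacobiPoly α n).eval t) / (1 - t ^ 2)) t := by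
  have h1 := (hasDerivAt_one_sub_sq t).mul ((derivative (jacobiPoly α n)).hasDerivAt t)
  have h2 := ((((hasDerivAt_id t).const_mul (α + 1)).const_add α).div_const 2).mul
    ((jacobiPoly α n).hasDerivAt t)
  have ode := congrArg (eval t) (jacobiPoly_ode hα n)
  simp only [eval_mul, eval_add, eval_sub, eval_pow, eval_C, eval_X, eval_natCast, eval_ofNat,
    eval_one] at ode
  refine (h1.sub h2).congr_deriv ?_
  rw [eq_div_iff ht, liouvilleMomentum, liouvillePotential, id_eq]
  linear_combination (1 - t ^ 2) * ode

theorem hasDerivAt_soninFunction (hα : -1 < α) (n : ℕ) {t : ℝ} (ht : t ∈ Set.Ioo (-1 : ℝ) 1)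
    (hq : liouvillePotential α n t ≠ 0) :
    HasDerivAt (soninFunction α n)
      (liouvilleWeight α t * liouvilleMomentum α n t ^ 2 *
        ((α ^ 2 - 1 / 4) * (1 + t) ^ 2 / 2 + (1 - t) ^ 2 / 8) /
          (liouvillePotential α n t ^ 2 * (1 - t ^ 2))) t := by
  have ht2 : 1 - t ^ 2 ≠ 0 := by nlinarith [ht.1, ht.2]
  have hy : (derivative (jacobiPoly α n)).eval t = (liouvilleMomentum α n t +
      (α + (α + 1) * t) / 2 * (jacobiPoly α n).eval t) / (1 - t ^ 2) := by
    rw [eq_div_iff ht2, liouvilleMomentum]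
    ring
  have hpotential : ((n : ℝ) + (α + 1) / 2) ^ 2 = (liouvillePotential α n t -
      (1 / 4 - α ^ 2) * (1 + t) / 2 - (1 - t) / 8) / (1 - t ^ 2) := by
    rw [eq_div_iff ht2, liouvillePotential]
    ring
  have hf := (hasDerivAt_liouvilleWeight (α := α) ht).mul
    ((((jacobiPoly α n).hasDerivAt t).pow 2).add
      (((hasDerivAt_liouvilleMomentum hα n ht2).pow 2).div (hasDerivAt_liouvillePotential n t) hq))
  refine hf.congr_deriv ?_
  simp only [Pi.add_apply, Pi.pow_apply, Pi.div_apply, hy, hpotential]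
  field_simp
  ring

theorem monotoneOn_soninFunction (hα : 1 / 2 ≤ α) (n : ℕ) {b : ℝ} (hb : b < 1)
    (hq : ∀ t ∈ Set.Ioc (-1) b, 0 < liouvillePotential α n t) :
    MonotoneOn (soninFunction α n) (Set.Ioc (-1) b) := by
  have hderiv : ∀ t ∈ Set.Ioc (-1) b, HasDerivAt (soninFunction α n) _ t := fun t ht =>
    hasDerivAt_soninFunction (by linarith) n ⟨ht.1, ht.2.trans_lt hb⟩ (hq t ht).ne'
  refine monotoneOn_of_deriv_nonneg (convex_Ioc (-1) b)
    (fun t ht => (hderiv t ht).continuousAt.continuousWithinAt)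
    (fun t ht => (hderiv t (interior_subset ht)).differentiableAt.differentiableWithinAt)
    fun t ht => ?_
  have ht := interior_subset ht
  rw [(hderiv t ht).deriv]
  have h1 : 0 ≤ 1 - t ^ 2 := by nlinarith [ht.1, ht.2]
  have h2 : 0 ≤ α ^ 2 - 1 / 4 := by nlinarith
  have h3 : 0 ≤ liouvilleWeight α t := liouvilleWeight_nonneg (ht.2.trans hb.le)
  positivity

theorem one_fourth_le_liouvillePotential (hα : -1 ≤ α) {n : ℕ} {t : ℝ}
    (ht : t ∈ Set.Icc (-1 : ℝ) 1) (h : α ^ 2 ≤ n ^ 2 * (1 - t)) :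
    1 / 4 ≤ liouvillePotential α n t := by
  have h1 : 0 ≤ 1 + t := by linarith [ht.1]
  have h2 : 0 ≤ 1 - t := by linarith [ht.2]
  have hn : (n : ℝ) ^ 2 ≤ (n + (α + 1) / 2) ^ 2 := by gcongr; linarith
  have : (n : ℝ) ^ 2 * (1 - t ^ 2) ≤ (n + (α + 1) / 2) ^ 2 * (1 - t ^ 2) := by
    gcongr; nlinarith
  have : α ^ 2 * (1 + t) ≤ n ^ 2 * (1 - t) * (1 + t) := by gcongr
  rw [liouvillePotential]
  nlinarith

theorem liouvilleMomentum_sq_le (hα : 0 ≤ α) (n : ℕ) {t : ℝ} (ht : t ∈ Set.Icc (0 : ℝ) 1) :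
    liouvilleMomentum α n t ^ 2 ≤
      2 * ((1 - t ^ 2) * (n * (n + α + 1))) + 2 * (α + 1 / 2) ^ 2 := by
  set y := (jacobiPoly α n).eval t
  set y' := (derivative (jacobiPoly α n)).eval t
  have ht0 := ht.1
  have ht2 : 0 ≤ 1 - t ^ 2 := by nlinarith [ht.2]
  have derivative_term : ((1 - t ^ 2) * y') ^ 2 ≤ (1 - t ^ 2) * (n * (n + α + 1)) :=
    calc ((1 - t ^ 2) * y') ^ 2 = (1 - t ^ 2) * ((1 - t ^ 2) * y' ^ 2) := by ring
      _ ≤ _ := mul_le_mul_of_nonneg_left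
        (one_sub_sq_mul_sq_eval_derivative_jacobiPoly_le hα n ht) ht2
  have value_term : ((α + (α + 1) * t) / 2 * y) ^ 2 ≤ (α + 1 / 2) ^ 2 :=
    calc ((α + (α + 1) * t) / 2 * y) ^ 2 = ((α + (α + 1) * t) / 2) ^ 2 * y ^ 2 := mul_pow ..
      _ ≤ (α + 1 / 2) ^ 2 * 1 := by
        gcongr
        · nlinarith [ht.2]
        · exact sq_eval_jacobiPoly_le_one hα n ht
      _ = (α + 1 / 2) ^ 2 := mul_one _
  calc liouvilleMomentum α n t ^ 2
      ≤ 2 * ((1 - t ^ 2) * y') ^ 2 + 2 * ((α + (α + 1) * t) / 2 * y) ^ 2 := by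
        rw [liouvilleMomentum]
        linarith [sq_nonneg ((1 - t ^ 2) * y' + (α + (α + 1) * t) / 2 * y)]
    _ ≤ _ := by gcongr

theorem rpow_mul_liouvilleWeight_le (hα : 0 ≤ α) {r t : ℝ} (hr : 0 ≤ r) (ht : t ≤ 1)
    (h : r ^ 2 * (1 - t) ≤ α ^ 2) :
    r ^ (2 * α + 1) * liouvilleWeight α t ≤ α ^ (2 * α + 1) * √2 := by
  have sq_rpow {s : ℝ} (hs : 0 ≤ s) : s ^ (2 * α + 1) = (s ^ 2) ^ (α + 1 / 2) := by
    rw [← rpow_natCast_mul hs]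
    congr 1
    push_cast
    ring
  have h1 : 0 ≤ 1 - t := sub_nonneg.2 ht
  calc r ^ (2 * α + 1) * liouvilleWeight α t
      = (r ^ 2 * (1 - t)) ^ (α + 1 / 2) * √(1 + t) := by
        rw [mul_rpow (sq_nonneg r) h1, ← sq_rpow hr, liouvilleWeight, mul_assoc]
    _ ≤ (α ^ 2) ^ (α + 1 / 2) * √2 := by
        gcongr
        linarith
    _ = α ^ (2 * α + 1) * √2 := by rw [← sq_rpow hα]

theorem one_sub_div_sq_mem_Ico (hα : 0 < α) {r : ℝ} (hr : 2 * α ≤ r) :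
    1 - (α / r) ^ 2 ∈ Set.Ico (0 : ℝ) 1 := by
  have hr0 : 0 < r := by linarith
  have h0 : 0 < α / r := div_pos hα hr0
  have h1 : α / r ≤ 1 / 2 := (div_le_iff₀ hr0).2 (by linarith)
  constructor <;> nlinarith [h0, h1]

/-- The constant of the Bernstein-type inequality for `P_n^{(α,0)}`. -/
def bernsteinConst (α : ℝ) : ℝ :=
  α ^ (2 * α + 1) * √2 * (1 + 4 * (2 * (6 * α ^ 2) + 2 * (α + 1 / 2) ^ 2))

theorem rpow_mul_soninFunction_le (hα : 1 / 2 ≤ α) {n : ℕ} (hn : 2 * α ≤ n) :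
    (n : ℝ) ^ (2 * α + 1) * soninFunction α n (1 - (α / n) ^ 2) ≤ bernsteinConst α := by
  have hn0 : (0 : ℝ) < n := by linarith
  have hα0 : 0 ≤ α := by linarith
  set b := 1 - (α / n) ^ 2 with hb
  have hb_mem : b ∈ Set.Icc (0 : ℝ) 1 :=
    Set.Ico_subset_Icc_self (one_sub_div_sq_mem_Ico (by linarith) hn)
  have hnb : (n : ℝ) ^ 2 * (1 - b) = α ^ 2 := by
    rw [hb]
    field_simp
    ring
  have hpotential : 1 / 4 ≤ liouvillePotential α n b :=
    one_fourth_le_liouvillePotential (by linarith) ⟨by linarith [hb_mem.1], hb_mem.2⟩ hnb.ge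
  have hmomentum : liouvilleMomentum α n b ^ 2 ≤ 2 * (6 * α ^ 2) + 2 * (α + 1 / 2) ^ 2 := by
    have derivative_term : (1 - b ^ 2) * (n * (n + α + 1)) ≤ 6 * α ^ 2 :=
      calc (1 - b ^ 2) * (n * (n + α + 1)) ≤ (2 * (1 - b)) * (3 * n ^ 2) := by
            refine mul_le_mul ?_ ?_ (by positivity) ?_ <;> nlinarith [hb_mem.2]
        _ = 6 * α ^ 2 := by rw [← hnb]; ring
    linarith [liouvilleMomentum_sq_le hα0 n hb_mem]
  rw [soninFunction, ← mul_assoc, bernsteinConst]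
  refine mul_le_mul (rpow_mul_liouvilleWeight_le hα0 hn0.le hb_mem.2 hnb.le)
    (add_le_add (sq_eval_jacobiPoly_le_one hα0 n hb_mem) ?_) (by positivity) (by positivity)
  calc liouvilleMomentum α n b ^ 2 / liouvillePotential α n b
      ≤ liouvilleMomentum α n b ^ 2 / (1 / 4) := by gcongr
    _ = 4 * liouvilleMomentum α n b ^ 2 := by ring
    _ ≤ _ := by gcongr

theorem rpow_mul_liouvilleWeight_mul_sq_eval_jacobiPoly_le (hα : 1 / 2 ≤ α) {n : ℕ}
    (hn : 2 * α ≤ n) {t : ℝ} (ht : t ∈ Set.Ioc (-1 : ℝ) 1) :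
    (n : ℝ) ^ (2 * α + 1) * (liouvilleWeight α t * (jacobiPoly α n).eval t ^ 2) ≤
      bernsteinConst α := by
  have hn0 : (0 : ℝ) < n := by linarith
  have hα0 : 0 < α := by linarith
  set b := 1 - (α / n) ^ 2 with hb
  obtain ⟨hb0, hb1⟩ : b ∈ Set.Ico (0 : ℝ) 1 := one_sub_div_sq_mem_Ico hα0 hn
  have hnb : (n : ℝ) ^ 2 * (1 - b) = α ^ 2 := by
    rw [hb]
    field_simp
    ring
  rcases le_or_gt b t with hbt | htb
  · have hy := sq_eval_jacobiPoly_le_one hα0.le n ⟨hb0.trans hbt, ht.2⟩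
    have hw := rpow_mul_liouvilleWeight_le hα0.le hn0.le ht.2
      (hnb ▸ by gcongr : (n : ℝ) ^ 2 * (1 - t) ≤ α ^ 2)
    rw [← mul_assoc, bernsteinConst]
    gcongr
    refine hy.trans (le_add_of_nonneg_right ?_)
    positivity
  · have hpotential : ∀ s ∈ Set.Ioc (-1) b, 0 < liouvillePotential α n s := fun s hs =>
      (by norm_num : (0 : ℝ) < 1 / 4).trans_le <| one_fourth_le_liouvillePotential (by linarith)
        ⟨hs.1.le, hs.2.trans hb1.le⟩ (hnb ▸ by gcongr; exact hs.2)
    have hmono := monotoneOn_soninFunction hα n hb1 hpotential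
    calc (n : ℝ) ^ (2 * α + 1) * (liouvilleWeight α t * (jacobiPoly α n).eval t ^ 2)
        ≤ (n : ℝ) ^ (2 * α + 1) * soninFunction α n t := by
          rw [soninFunction]
          have := liouvilleWeight_nonneg (α := α) ht.2
          have := hpotential t ⟨ht.1, htb.le⟩
          gcongr
          exact le_add_of_nonneg_right (by positivity)
      _ ≤ (n : ℝ) ^ (2 * α + 1) * soninFunction α n b := by
          gcongr
          exact hmono ⟨ht.1, htb.le⟩ ⟨ht.1.trans htb, le_rfl⟩ htb.le
      _ ≤ bernsteinConst α := rpow_mul_soninFunction_le hα hn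

theorem rpow_mul_sq_eval_jacobiPoly_le (hα : 1 / 2 ≤ α) {n : ℕ} (hn : 2 * α ≤ n) {ε t : ℝ}
    (hε : 0 < ε) (ht : t ∈ Set.Icc (-1 + ε) 1) :
    (n * √(1 - t)) ^ (2 * α + 1) * (jacobiPoly α n).eval t ^ 2 ≤ bernsteinConst α / √ε := by
  have h1 : 0 ≤ 1 - t := sub_nonneg.2 ht.2
  rw [le_div_iff₀ (sqrt_pos.2 hε)]
  calc (n * √(1 - t)) ^ (2 * α + 1) * (jacobiPoly α n).eval t ^ 2 * √ε
      ≤ (n * √(1 - t)) ^ (2 * α + 1) * (jacobiPoly α n).eval t ^ 2 * √(1 + t) := by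
        gcongr
        linarith [ht.1]
    _ = (n : ℝ) ^ (2 * α + 1) * (liouvilleWeight α t * (jacobiPoly α n).eval t ^ 2) := by
        rw [mul_rpow n.cast_nonneg (sqrt_nonneg _), sqrt_eq_rpow (1 - t), ← rpow_mul h1,
          liouvilleWeight, show 1 / 2 * (2 * α + 1) = α + 1 / 2 by ring]
        ring
    _ ≤ bernsteinConst α := rpow_mul_liouvilleWeight_mul_sq_eval_jacobiPoly_le hα hn
        ⟨by linarith [ht.1], ht.2⟩

theorem exists_forall_one_add_rpow_mul_sq_eval_jacobiPoly_le (hα : 1 / 2 ≤ α) {ε : ℝ}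
    (hε : 0 < ε) :
    ∃ K, ∀ n : ℕ, 2 * α ≤ n → ∀ t ∈ Set.Icc (-1 + ε) 1,
      (1 + n * √(1 - t)) ^ (2 * α + 1) * (jacobiPoly α n).eval t ^ 2 ≤ K := by
  set B := bernsteinConst α / √ε
  have hB : 0 ≤ B := by
    have : 0 ≤ α := by linarith
    unfold B bernsteinConst
    positivity
  refine ⟨2 ^ (2 * α) * (1 + B + B), fun n hn t ht => ?_⟩
  set y := (jacobiPoly α n).eval t
  set s := n * √(1 - t)
  have hs0 : 0 ≤ s := by positivity
  have decay : s ^ (2 * α + 1) * y ^ 2 ≤ B := rpow_mul_sq_eval_jacobiPoly_le hα hn hε ht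
  have bounded : y ^ 2 ≤ 1 + B := by
    rcases le_or_gt 0 t with ht0 | ht0
    · linarith [sq_eval_jacobiPoly_le_one (by linarith : 0 ≤ α) n ⟨ht0, ht.2⟩]
    · have hs : 1 ≤ s := one_le_mul_of_one_le_of_one_le (by linarith)
        (one_le_sqrt.2 (by linarith))
      have : y ^ 2 ≤ s ^ (2 * α + 1) * y ^ 2 :=
        le_mul_of_one_le_left (sq_nonneg y) (one_le_rpow hs (by linarith))
      linarith
  have convexity : (1 + s) ^ (2 * α + 1) ≤ 2 ^ (2 * α) * (1 + s ^ (2 * α + 1)) := by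
    have h := NNReal.coe_le_coe.2 <|
      NNReal.rpow_add_le_mul_rpow_add_rpow 1 s.toNNReal (by linarith : 1 ≤ 2 * α + 1)
    simpa only [NNReal.coe_add, NNReal.coe_mul, NNReal.coe_rpow, NNReal.coe_one, coe_toNNReal s hs0,
      NNReal.coe_ofNat, one_rpow, add_sub_cancel_right] using h
  calc (1 + s) ^ (2 * α + 1) * y ^ 2
      ≤ 2 ^ (2 * α) * (1 + s ^ (2 * α + 1)) * y ^ 2 := by gcongr
    _ = 2 ^ (2 * α) * (y ^ 2 + s ^ (2 * α + 1) * y ^ 2) := by ring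
    _ ≤ 2 ^ (2 * α) * (1 + B + B) := by gcongr

end Jacobi

section LatticeFourier

open Function

variable {d : ℕ}

/-- The character `v ↦ e^{i⟨ξ, v⟩}` of the lattice `ℤ^d`. -/
def latticeChar (ξ : Fin d → ℝ) (v : Fin d → ℤ) : ℂ :=
  Complex.exp (Complex.I * ((∑ i, ξ i * (v i : ℝ) : ℝ) : ℂ))

/-- The fundamental domain `[-π, π]^d` of the dual torus of `ℤ^d`. -/
def dualBox (d : ℕ) : Set (Fin d → ℝ) := Set.univ.pi fun _ => Set.Icc (-π) π

theorem latticeChar_zero (ξ : Fin d → ℝ) : latticeChar ξ 0 = 1 := by simp [latticeChar]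

theorem latticeChar_add (ξ : Fin d → ℝ) (v w : Fin d → ℤ) :
    latticeChar ξ (v + w) = latticeChar ξ v * latticeChar ξ w := by
  simp only [latticeChar, ← Complex.exp_add, ← mul_add, ← Complex.ofReal_add,
    ← Finset.sum_add_distrib, Pi.add_apply, Int.cast_add]

theorem conj_latticeChar (ξ : Fin d → ℝ) (v : Fin d → ℤ) :
    starRingEnd ℂ (latticeChar ξ v) = latticeChar ξ (-v) := by
  simp [latticeChar, ← Complex.exp_conj]

theorem re_latticeChar (ξ : Fin d → ℝ) (v : Fin d → ℤ) :
    (latticeChar ξ v).re = Real.cos (∑ i, ξ i * (v i : ℝ)) := by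
  rw [latticeChar, mul_comm, Complex.exp_ofReal_mul_I_re]

theorem continuous_latticeChar (v : Fin d → ℤ) :
    Continuous fun ξ : Fin d → ℝ => latticeChar ξ v := by
  unfold latticeChar
  fun_prop

theorem isCompact_dualBox (d : ℕ) : IsCompact (dualBox d) :=
  isCompact_univ_pi fun _ => isCompact_Icc

theorem integral_Icc_exp_I_mul_intCast (k : ℤ) :
    ∫ t in Set.Icc (-π) π, Complex.exp (Complex.I * ((t * k : ℝ) : ℂ)) =
      if k = 0 then 2 * (π : ℂ) else 0 := by
  rw [integral_Icc_eq_integral_Ioc, ← intervalIntegral.integral_of_le (by linarith [pi_pos])]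
  split_ifs with hk
  · simp only [hk, Int.cast_zero, mul_zero, Complex.ofReal_zero, Complex.exp_zero,
      intervalIntegral.integral_const, sub_neg_eq_add, Complex.real_smul, Complex.ofReal_add]
    ring
  · have hc : Complex.I * (k : ℂ) ≠ 0 := by simp [hk]
    have periodic : Complex.exp (Complex.I * k * (π : ℝ)) =
        Complex.exp (Complex.I * k * (-π : ℝ)) :=
      Complex.exp_eq_exp_iff_exists_int.2 ⟨k, by push_cast; ring⟩
    calc ∫ t in -π..π, Complex.exp (Complex.I * ((t * k : ℝ) : ℂ))
        = ∫ t in -π..π, Complex.exp (Complex.I * k * (t : ℂ)) := by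
          congr with t
          push_cast
          ring_nf
      _ = 0 := by rw [integral_exp_mul_complex hc, periodic, sub_self, zero_div]

theorem integral_latticeChar (v : Fin d → ℤ) :
    ∫ ξ in dualBox d, latticeChar ξ v = if v = 0 then (2 * (π : ℂ)) ^ d else 0 := by
  have product (ξ : Fin d → ℝ) : latticeChar ξ v =
      ∏ i, Complex.exp (Complex.I * ((ξ i * (v i : ℝ) : ℝ) : ℂ)) := by
    rw [latticeChar, ← Complex.exp_sum, Complex.ofReal_sum, Finset.mul_sum]
  simp_rw [product]
  rw [dualBox, volume_pi, Measure.restrict_pi_pi, integral_fintype_prod_eq_prod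
    (f := fun i t => Complex.exp (Complex.I * ((t * (v i : ℝ) : ℝ) : ℂ)))]
  simp_rw [integral_Icc_exp_I_mul_intCast]
  split_ifs with hv
  · simp [hv]
  · obtain ⟨i, hi⟩ := Function.ne_iff.1 hv
    exact Finset.prod_eq_zero (Finset.mem_univ i) (if_neg hi)

theorem ftOmega_eq_tsum (x : (Fin d → ℤ) → ℝ) (ξ : Fin d → ℝ) :
    ftOmega x ξ = ∑' v, (x v : ℂ) * latticeChar ξ v := rfl

theorem ftOmega_eq_sum {x : (Fin d → ℤ) → ℝ} (hx : HasFiniteSupport x) (ξ : Fin d → ℝ) :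
    ftOmega x ξ = ∑ v ∈ hx.toFinset, (x v : ℂ) * latticeChar ξ v :=
  tsum_eq_sum fun v hv => by
    rw [notMem_support.1 (mt hx.mem_toFinset.2 hv), Complex.ofReal_zero, zero_mul]

theorem summable_mul_latticeChar {x : (Fin d → ℤ) → ℝ} (hx : HasFiniteSupport x)
    (ξ : Fin d → ℝ) : Summable fun v => (x v : ℂ) * latticeChar ξ v :=
  summable_of_hasFiniteSupport <| HasFiniteSupport.fun_mul_left
    (hx.fun_comp Complex.ofReal_zero) _

theorem continuous_ftOmega {x : (Fin d → ℤ) → ℝ} (hx : HasFiniteSupport x) :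
    Continuous (ftOmega x) := by
  rw [funext (ftOmega_eq_sum hx)]
  exact continuous_finsetSum _ fun v _ => (continuous_latticeChar v).const_mul _

theorem ftOmega_ite_eq_zero (ξ : Fin d → ℝ) :
    ftOmega (fun v => if v = 0 then 1 else 0) ξ = 1 := by
  rw [ftOmega_eq_tsum, tsum_eq_single 0 fun v hv => by simp [hv]]
  simp [latticeChar_zero]

theorem ftOmega_const_mul (c : ℝ) (x : (Fin d → ℤ) → ℝ) (ξ : Fin d → ℝ) :
    ftOmega (fun v => c * x v) ξ = c * ftOmega x ξ := by
  simp only [ftOmega_eq_tsum, Complex.ofReal_mul, mul_assoc, tsum_mul_left]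

theorem ftOmega_add {x y : (Fin d → ℤ) → ℝ} (hx : HasFiniteSupport x) (hy : HasFiniteSupport y)
    (ξ : Fin d → ℝ) : ftOmega (fun v => x v + y v) ξ = ftOmega x ξ + ftOmega y ξ := by
  simp only [ftOmega_eq_tsum, Complex.ofReal_add, add_mul]
  exact (summable_mul_latticeChar hx ξ).tsum_add (summable_mul_latticeChar hy ξ)

theorem ftOmega_sub {x y : (Fin d → ℤ) → ℝ} (hx : HasFiniteSupport x) (hy : HasFiniteSupport y)
    (ξ : Fin d → ℝ) : ftOmega (fun v => x v - y v) ξ = ftOmega x ξ - ftOmega y ξ := by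
  simp only [ftOmega_eq_tsum, Complex.ofReal_sub, sub_mul]
  exact (summable_mul_latticeChar hx ξ).tsum_sub (summable_mul_latticeChar hy ξ)

theorem ftOmega_translate (x : (Fin d → ℤ) → ℝ) (η : Fin d → ℤ) (ξ : Fin d → ℝ) :
    ftOmega (fun v => x (v - η)) ξ = ftOmega x ξ * latticeChar ξ η := by
  rw [ftOmega_eq_tsum, ftOmega_eq_tsum, ← tsum_mul_right,
    ← (Equiv.addRight η).tsum_eq fun v => (x (v - η) : ℂ) * latticeChar ξ v]
  refine tsum_congr fun v => ?_
  rw [Equiv.coe_addRight, add_sub_cancel_right, latticeChar_add, mul_assoc]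

theorem latticeConv_eq_sum {x : (Fin d → ℤ) → ℝ} (hx : HasFiniteSupport x)
    (ω : (Fin d → ℤ) → ℝ) (v : Fin d → ℤ) :
    latticeConv ω x v = ∑ η ∈ hx.toFinset, ω (v - η) * x η :=
  tsum_eq_sum fun η hη => by rw [notMem_support.1 (mt hx.mem_toFinset.2 hη), mul_zero]

theorem hasFiniteSupport_latticeConv {ω x : (Fin d → ℤ) → ℝ} (hω : HasFiniteSupport ω)
    (hx : HasFiniteSupport x) : HasFiniteSupport (latticeConv ω x) := by
  rw [funext (latticeConv_eq_sum hx ω)]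
  refine (Set.Finite.image2 (· + ·) hω hx).subset fun v hv => ?_
  obtain ⟨η, _, hη⟩ := Finset.exists_ne_zero_of_sum_ne_zero hv
  exact ⟨v - η, left_ne_zero_of_mul hη, η, right_ne_zero_of_mul hη, sub_add_cancel v η⟩

theorem ftOmega_latticeConv {ω x : (Fin d → ℤ) → ℝ} (hω : HasFiniteSupport ω)
    (hx : HasFiniteSupport x) (ξ : Fin d → ℝ) :
    ftOmega (latticeConv ω x) ξ = ftOmega ω ξ * ftOmega x ξ := by
  have translate (η : Fin d → ℤ) : HasFiniteSupport fun v => ω (v - η) * x η :=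
    (hω.fun_comp_of_injective sub_left_injective).fun_mul_left _
  calc ftOmega (latticeConv ω x) ξ
      = ∑' v, ∑ η ∈ hx.toFinset, ((ω (v - η) * x η : ℝ) : ℂ) * latticeChar ξ v := by
        simp only [ftOmega_eq_tsum, latticeConv_eq_sum hx, Complex.ofReal_sum, Finset.sum_mul]
    _ = ∑ η ∈ hx.toFinset, ftOmega (fun v => x η * ω (v - η)) ξ := by
        simp_rw [mul_comm (x _)]
        exact Summable.tsum_finsetSum fun η _ => summable_mul_latticeChar (translate η) ξ
    _ = ∑ η ∈ hx.toFinset, ftOmega ω ξ * (x η * latticeChar ξ η) :=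
        Finset.sum_congr rfl fun η _ => by
          rw [ftOmega_const_mul, ftOmega_translate]
          ring
    _ = ftOmega ω ξ * ftOmega x ξ := by rw [← Finset.mul_sum, ← ftOmega_eq_sum hx]

theorem ftOmega_eq_ofReal_re {x : (Fin d → ℤ) → ℝ} (hx : ∀ v, x (-v) = x v) (ξ : Fin d → ℝ) :
    ftOmega x ξ = ((ftOmega x ξ).re : ℂ) := by
  refine (Complex.conj_eq_iff_re.1 ?_).symm
  rw [ftOmega_eq_tsum, Complex.conj_tsum, ← (Equiv.neg _).tsum_eq]
  refine tsum_congr fun v => ?_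
  rw [Equiv.neg_apply, map_mul, Complex.conj_ofReal, conj_latticeChar, neg_neg, hx]

theorem integral_norm_sq_ftOmega {x : (Fin d → ℤ) → ℝ} (hx : HasFiniteSupport x) :
    ∫ ξ in dualBox d, ‖ftOmega x ξ‖ ^ 2 = (2 * π) ^ d * ∑' v, x v ^ 2 := by
  have expansion (ξ : Fin d → ℝ) : ((‖ftOmega x ξ‖ ^ 2 : ℝ) : ℂ) =
      ∑ v ∈ hx.toFinset, ∑ w ∈ hx.toFinset, (x v * x w : ℂ) * latticeChar ξ (v - w) := by
    rw [Complex.ofReal_pow, ← Complex.mul_conj', ftOmega_eq_sum hx, map_sum, Finset.sum_mul_sum]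
    refine Finset.sum_congr rfl fun v _ => Finset.sum_congr rfl fun w _ => ?_
    rw [map_mul, conj_latticeChar, sub_eq_add_neg, latticeChar_add, Complex.conj_ofReal]
    ring
  have integrable (c : ℂ) (v : Fin d → ℤ) :
      IntegrableOn (fun ξ => c * latticeChar ξ v) (dualBox d) :=
    ((continuous_latticeChar v).const_mul c).continuousOn.integrableOn_compact
      (isCompact_dualBox d)
  have orthogonality (v : Fin d → ℤ) (hv : v ∈ hx.toFinset) :
      ∑ w ∈ hx.toFinset, ∫ ξ in dualBox d, (x v * x w : ℂ) * latticeChar ξ (v - w) =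
        (2 * π) ^ d * x v ^ 2 := by
    simp_rw [integral_const_mul, integral_latticeChar, sub_eq_zero]
    simp only [mul_ite, mul_zero, Finset.sum_ite_eq, hv, if_true]
    ring
  have htsum : ∑' v, x v ^ 2 = ∑ v ∈ hx.toFinset, x v ^ 2 := tsum_eq_sum fun v hv => by
    rw [notMem_support.1 (mt hx.mem_toFinset.2 hv), zero_pow two_ne_zero]
  apply Complex.ofReal_injective
  rw [← integral_complex_ofReal, htsum]
  simp_rw [expansion]
  rw [integral_finsetSum _ fun _ _ => integrable_finsetSum _ fun _ _ => integrable _ _]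
  simp_rw [integral_finsetSum _ fun _ _ => integrable _ _]
  rw [Finset.sum_congr rfl orthogonality, ← Finset.mul_sum]
  push_cast
  rfl

end LatticeFourier

section JacobiIteration

open Function Polynomial

/-- `x` is the Jacobi polynomial iteration on `ℤ^d` driven by the convolution kernel `ω`. -/
structure IsJacobiIteration {d : ℕ} (ω : (Fin d → ℤ) → ℝ) (x : ℕ → (Fin d → ℤ) → ℝ) : Prop where
  zero : ∀ v, x 0 v = if v = 0 then 1 else 0
  one : ∀ v, x 1 v = aCoef0 d * latticeConv ω (x 0) v + bCoef0 d * x 0 v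
  succ : ∀ n, 1 ≤ n → ∀ v,
    x (n + 1) v =
      aCoef d n * latticeConv ω (x n) v + bCoef d n * x n v - cCoef d n * x (n - 1) v

theorem jacobiPoly_half_one (d : ℕ) :
    jacobiPoly (d / 2) 1 = C (aCoef0 d) * X + C (bCoef0 d) := by
  refine Polynomial.funext fun t => ?_
  simp only [jacobiPoly, aCoef0, bCoef0, eval_add, eval_mul, eval_C, eval_X]
  field_simp
  ring

theorem jacobiPoly_half_add_two (d n : ℕ) :
    jacobiPoly (d / 2) (n + 2) =
      (C (aCoef d (n + 1)) * X + C (bCoef d (n + 1))) * jacobiPoly (d / 2) (n + 1) -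
        C (cCoef d (n + 1)) * jacobiPoly (d / 2) n := by
  refine Polynomial.funext fun t => ?_
  simp only [jacobiPoly, aCoef, bCoef, cCoef, eval_add, eval_sub, eval_mul, eval_C, eval_X]
  push_cast
  field_simp
  ring

namespace IsJacobiIteration

variable {d : ℕ} {ω : (Fin d → ℤ) → ℝ} {x : ℕ → (Fin d → ℤ) → ℝ}

theorem add_two (hx : IsJacobiIteration ω x) (n : ℕ) :
    x (n + 2) = fun v => aCoef d (n + 1) * latticeConv ω (x (n + 1)) v +
      bCoef d (n + 1) * x (n + 1) v - cCoef d (n + 1) * x n v :=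
  funext (hx.succ (n + 1) n.succ_pos)

theorem hasFiniteSupport (hx : IsJacobiIteration ω x) (hω : HasFiniteSupport ω) (n : ℕ) :
    HasFiniteSupport (x n) := by
  have step (a b : ℝ) {y : (Fin d → ℤ) → ℝ} (hy : HasFiniteSupport y) :
      HasFiniteSupport fun v => a * latticeConv ω y v + b * y v :=
    ((hasFiniteSupport_latticeConv hω hy).fun_mul_right _).fun_add (hy.fun_mul_right _)
  have finite_zero : HasFiniteSupport (x 0) :=
    (Set.finite_singleton 0).subset fun v hv => by simpa [hx.zero] using hv
  induction n using Nat.twoStepInduction with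
  | zero => exact finite_zero
  | one => exact funext hx.one ▸ step _ _ finite_zero
  | more n ih₀ ih₁ => exact hx.add_two n ▸ (step _ _ ih₁).fun_sub (ih₀.fun_mul_right _)

theorem ftOmega_eq (hx : IsJacobiIteration ω x) (hω : HasFiniteSupport ω) (n : ℕ)
    (ξ : Fin d → ℝ) : ftOmega (x n) ξ = aeval (ftOmega ω ξ) (jacobiPoly (d / 2) n) := by
  have finite := hx.hasFiniteSupport hω
  have finite_smul (c : ℝ) (n : ℕ) : HasFiniteSupport fun v => c * x n v :=
    (finite n).fun_mul_right _
  have finite_conv (c : ℝ) (n : ℕ) : HasFiniteSupport fun v => c * latticeConv ω (x n) v :=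
    (hasFiniteSupport_latticeConv hω (finite n)).fun_mul_right _
  have step (a b : ℝ) (n : ℕ) :
      ftOmega (fun v => a * latticeConv ω (x n) v + b * x n v) ξ =
        (a * ftOmega ω ξ + b) * ftOmega (x n) ξ := by
    rw [ftOmega_add (finite_conv a n) (finite_smul b n), ftOmega_const_mul, ftOmega_const_mul,
      ftOmega_latticeConv hω (finite n)]
    ring
  have ftOmega_zero : ftOmega (x 0) ξ = 1 := by rw [funext hx.zero, ftOmega_ite_eq_zero]
  induction n using Nat.twoStepInduction with
  | zero => rw [ftOmega_zero, jacobiPoly, map_one]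
  | one => simp [funext hx.one, step, ftOmega_zero, jacobiPoly_half_one]
  | more n ih₀ ih₁ =>
    rw [hx.add_two, ftOmega_sub ((finite_conv _ _).fun_add (finite_smul _ _)) (finite_smul _ _),
      step, ftOmega_const_mul, ih₀, ih₁, jacobiPoly_half_add_two]
    simp

theorem integral_sq_eval_jacobiPoly (hx : IsJacobiIteration ω x) (hω : HasFiniteSupport ω)
    (hsymm : ∀ v, ω (-v) = ω v) (n : ℕ) :
    ∫ ξ in dualBox d, (jacobiPoly (d / 2) n).eval (ftOmega ω ξ).re ^ 2 =
      (2 * π) ^ d * ∑' v, x n v ^ 2 := by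
  rw [← integral_norm_sq_ftOmega (hx.hasFiniteSupport hω n)]
  congr with ξ
  rw [hx.ftOmega_eq hω, ftOmega_eq_ofReal_re hsymm, Complex.ofReal_re,
    ← Complex.coe_algebraMap, aeval_algebraMap_apply_eq_algebraMap_eval, norm_algebraMap',
    norm_eq_abs, sq_abs]

end IsJacobiIteration

end JacobiIteration

section Symbol

open Function Asymptotics

theorem exists_pos_forall_mul_sq_norm_le {E : Type*} [NormedAddCommGroup E] {K : Set E}
    (hK : IsCompact K) {f : E → ℝ} (hf : ContinuousOn f K) (hpos : ∀ x ∈ K, x ≠ 0 → 0 < f x)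
    {c : ℝ} (hc : 0 < c) (hnear : ∀ᶠ x in 𝓝 0, c * ‖x‖ ^ 2 ≤ f x) :
    ∃ c' > 0, ∀ x ∈ K, c' * ‖x‖ ^ 2 ≤ f x := by
  obtain ⟨U, hU, hUo, hU0⟩ := eventually_nhds_iff.1 hnear
  obtain ⟨δ, hδ, hfar⟩ := (hK.diff hUo).exists_forall_le' (hf.mono Set.sdiff_subset)
    fun x hx => hpos x hx.1 fun h => hx.2 (h ▸ hU0)
  obtain ⟨R, hR0, hR⟩ := hK.isBounded.exists_pos_norm_le
  refine ⟨min c (δ / R ^ 2), by positivity, fun x hx => ?_⟩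
  by_cases hxU : x ∈ U
  · calc min c (δ / R ^ 2) * ‖x‖ ^ 2 ≤ c * ‖x‖ ^ 2 := by gcongr; exact min_le_left _ _
      _ ≤ f x := hU x hxU
  · calc min c (δ / R ^ 2) * ‖x‖ ^ 2 ≤ δ / R ^ 2 * R ^ 2 := by
          gcongr
          exacts [min_le_right _ _, hR x hx]
      _ = δ := div_mul_cancel₀ δ (by positivity)
      _ ≤ f x := hfar x ⟨hx, hxU⟩

theorem exists_pos_forall_mul_sq_norm_le_dotProduct_mulVec {ι : Type*} [Fintype ι]
    {Q : Matrix ι ι ℝ} (hQ : Q.PosDef) :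
    ∃ m > 0, ∀ ξ : ι → ℝ, m * ‖ξ‖ ^ 2 ≤ ξ ⬝ᵥ Q *ᵥ ξ := by
  obtain ⟨m, hm, hsphere⟩ := (isCompact_sphere (0 : ι → ℝ) 1).exists_forall_le'
    (f := fun ξ => ξ ⬝ᵥ Q *ᵥ ξ) (by fun_prop) (a := 0) fun ξ hξ =>
      hQ.dotProduct_mulVec_pos (ne_zero_of_mem_unit_sphere ⟨ξ, hξ⟩)
  refine ⟨m, hm, fun ξ => ?_⟩
  rcases eq_or_ne ξ 0 with rfl | hξ
  · simp
  have hnorm : ‖ξ‖ ≠ 0 := norm_ne_zero_iff.2 hξ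
  have := hsphere (‖ξ‖⁻¹ • ξ) (by simp [norm_smul, hnorm])
  calc m * ‖ξ‖ ^ 2 ≤ (‖ξ‖⁻¹ • ξ) ⬝ᵥ Q *ᵥ (‖ξ‖⁻¹ • ξ) * ‖ξ‖ ^ 2 := by gcongr
    _ = ξ ⬝ᵥ Q *ᵥ ξ := by
      simp only [mulVec_smul, smul_dotProduct, dotProduct_smul, smul_eq_mul]
      field_simp

theorem isLittleO_one_sub_cos_sub_half_sq :
    (fun t : ℝ => 1 - Real.cos t - t ^ 2 / 2) =o[𝓝 0] fun t => t ^ 2 := by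
  have quartic : (fun t : ℝ => 1 - Real.cos t - t ^ 2 / 2) =O[𝓝 0] fun t => t ^ 4 := by
    refine IsBigO.of_bound (5 / 96) ?_
    filter_upwards [Metric.closedBall_mem_nhds (0 : ℝ) one_pos] with t ht
    rw [norm_eq_abs, norm_eq_abs, abs_pow, mul_comm]
    convert cos_bound (mem_closedBall_zero_iff.1 ht) using 1
    rw [← abs_neg]
    ring_nf
  exact quartic.trans_isLittleO (isLittleO_pow_pow (by norm_num))

variable {d : ℕ} {ω : (Fin d → ℤ) → ℝ}

theorem re_ftOmega_eq_sum (hω : HasFiniteSupport ω) (ξ : Fin d → ℝ) :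
    (ftOmega ω ξ).re = ∑ v ∈ hω.toFinset, ω v * Real.cos (∑ i, ξ i * (v i : ℝ)) := by
  simp only [ftOmega_eq_sum hω, Complex.re_sum, Complex.re_ofReal_mul, re_latticeChar]

theorem ftOmega_apply_zero (x : (Fin d → ℤ) → ℝ) : ftOmega x 0 = (∑' v, x v : ℝ) := by
  simp [ftOmega, Complex.ofReal_tsum]

theorem dotProduct_covQ_mulVec (hω : HasFiniteSupport ω) (ξ : Fin d → ℝ) :
    ξ ⬝ᵥ covQ d ω *ᵥ ξ = ∑ v ∈ hω.toFinset, ω v * (∑ i, ξ i * (v i : ℝ)) ^ 2 := by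
  have covQ_apply (i j : Fin d) :
      covQ d ω i j = ∑ v ∈ hω.toFinset, ω v * (v i : ℝ) * (v j : ℝ) :=
    tsum_eq_sum fun v hv => by
      rw [notMem_support.1 (mt hω.mem_toFinset.2 hv), zero_mul, zero_mul]
  simp only [dotProduct, mulVec, covQ_apply, sq, Finset.mul_sum, Finset.sum_mul]
  rw [Finset.sum_congr rfl fun _ _ => Finset.sum_comm, Finset.sum_comm]
  refine Finset.sum_congr rfl fun v _ => ?_
  rw [Finset.sum_comm]
  refine Finset.sum_congr rfl fun i _ => Finset.sum_congr rfl fun j _ => ?_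
  ring

theorem isLittleO_one_sub_re_ftOmega_sub (hω : HasFiniteSupport ω) (hmass : ∑' v, ω v = 1) :
    (fun ξ => 1 - (ftOmega ω ξ).re - ξ ⬝ᵥ covQ d ω *ᵥ ξ / 2) =o[𝓝 0] fun ξ => ‖ξ‖ ^ 2 := by
  have expansion (ξ : Fin d → ℝ) : 1 - (ftOmega ω ξ).re - ξ ⬝ᵥ covQ d ω *ᵥ ξ / 2 =
      ∑ v ∈ hω.toFinset, ω v *
        (1 - Real.cos (∑ i, ξ i * (v i : ℝ)) - (∑ i, ξ i * (v i : ℝ)) ^ 2 / 2) := by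
    have mass : ∑ v ∈ hω.toFinset, ω v = 1 := by
      rw [← hmass, tsum_eq_sum fun v hv => notMem_support.1 (mt hω.mem_toFinset.2 hv)]
    simp only [mul_sub, mul_one, Finset.sum_sub_distrib, mass, re_ftOmega_eq_sum hω,
      dotProduct_covQ_mulVec hω, Finset.sum_div, mul_div_assoc]
  rw [funext expansion]
  refine IsLittleO.fun_sum fun v _ => IsLittleO.const_mul_left ?_ _
  have pairing_tendsto : Tendsto (fun ξ : Fin d → ℝ => ∑ i, ξ i * (v i : ℝ)) (𝓝 0) (𝓝 0) :=
    Continuous.tendsto' (by fun_prop) _ _ (by simp)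
  have pairing_isBigO : (fun ξ : Fin d → ℝ => ∑ i, ξ i * (v i : ℝ)) =O[𝓝 0] fun ξ => ‖ξ‖ :=
    IsBigO.fun_sum fun i _ => IsBigO.of_bound ‖(v i : ℝ)‖ <| .of_forall fun ξ => by
      rw [norm_mul, norm_norm, mul_comm]
      exact mul_le_mul_of_nonneg_left (norm_le_pi_norm ξ i) (norm_nonneg _)
  exact (isLittleO_one_sub_cos_sub_half_sq.comp_tendsto pairing_tendsto).trans_isBigO
    (pairing_isBigO.pow 2)

theorem exists_pos_forall_mul_sq_norm_le_one_sub_re_ftOmega (hω : HasFiniteSupport ω)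
    (hmass : ∑' v, ω v = 1) (hQ : (covQ d ω).PosDef)
    (haper : ∀ ξ ∈ dualBox d, ξ ≠ 0 → ‖ftOmega ω ξ‖ < 1) :
    ∃ c > 0, ∀ ξ ∈ dualBox d, c * ‖ξ‖ ^ 2 ≤ 1 - (ftOmega ω ξ).re := by
  obtain ⟨m, hm, hQm⟩ := exists_pos_forall_mul_sq_norm_le_dotProduct_mulVec hQ
  have quarter : 0 < m / 4 := by positivity
  have hre : Continuous fun ξ => (ftOmega ω ξ).re :=
    Complex.continuous_re.comp (continuous_ftOmega hω)
  refine exists_pos_forall_mul_sq_norm_le (isCompact_dualBox d)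
    (continuous_const.sub hre).continuousOn (fun ξ hξ h0 => ?_) quarter ?_
  · linarith [(Complex.re_le_norm (ftOmega ω ξ)).trans_lt (haper ξ hξ h0)]
  · filter_upwards [(isLittleO_one_sub_re_ftOmega_sub hω hmass).bound quarter] with ξ hξ
    rw [norm_of_nonneg (sq_nonneg ‖ξ‖), norm_eq_abs] at hξ
    linarith [(abs_le.1 hξ).1, hQm ξ]

theorem exists_pos_forall_neg_one_add_le_re_ftOmega (hω : HasFiniteSupport ω)
    (hmass : ∑' v, ω v = 1) (haper : ∀ ξ ∈ dualBox d, ξ ≠ 0 → ‖ftOmega ω ξ‖ < 1) :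
    ∃ ε > 0, ∀ ξ ∈ dualBox d, -1 + ε ≤ (ftOmega ω ξ).re := by
  have hre : Continuous fun ξ => (ftOmega ω ξ).re :=
    Complex.continuous_re.comp (continuous_ftOmega hω)
  have neg_one_lt (ξ : Fin d → ℝ) (hξ : ξ ∈ dualBox d) : -1 < (ftOmega ω ξ).re := by
    rcases eq_or_ne ξ 0 with rfl | h0
    · rw [ftOmega_apply_zero, hmass]
      norm_num
    · exact (abs_lt.1 ((Complex.abs_re_le_norm _).trans_lt (haper ξ hξ h0))).1
  obtain ⟨b, hb, hle⟩ := (isCompact_dualBox d).exists_forall_le' hre.continuousOn neg_one_lt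
  exact ⟨b + 1, by linarith, fun ξ hξ => by linarith [hle ξ hξ]⟩

end Symbol

section Decay

open Function Asymptotics Polynomial

section Haar

open Module

variable {E : Type*} [NormedAddCommGroup E] [NormedSpace ℝ E] [FiniteDimensional ℝ E]
  [MeasurableSpace E] [BorelSpace E] (μ : Measure E) [μ.IsAddHaarMeasure] {r a : ℝ}

theorem integrable_one_add_mul_norm (hr : (finrank ℝ E : ℝ) < r) (ha : 0 < a) :
    Integrable (fun x => (1 + a * ‖x‖) ^ (-r)) μ := by
  simpa [norm_smul, abs_of_pos ha] using
    (integrable_one_add_norm (μ := μ) hr).comp_smul ha.ne'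

theorem integral_one_add_mul_norm (ha : 0 < a) :
    ∫ x, (1 + a * ‖x‖) ^ (-r) ∂μ = (a ^ finrank ℝ E)⁻¹ * ∫ x, (1 + ‖x‖) ^ (-r) ∂μ := by
  simpa [norm_smul, abs_of_pos ha] using
    Measure.integral_comp_smul μ (fun x => (1 + ‖x‖) ^ (-r)) a

end Haar

variable {d : ℕ} {ω : (Fin d → ℤ) → ℝ}

theorem exists_forall_sq_eval_jacobiPoly_re_ftOmega_le (hd : 1 ≤ d) (hω : HasFiniteSupport ω)
    (hmass : ∑' v, ω v = 1) (hQ : (covQ d ω).PosDef)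
    (haper : ∀ ξ ∈ dualBox d, ξ ≠ 0 → ‖ftOmega ω ξ‖ < 1) :
    ∃ K, ∃ b > 0, ∀ n : ℕ, d ≤ n → ∀ ξ ∈ dualBox d,
      (jacobiPoly (d / 2) n).eval (ftOmega ω ξ).re ^ 2 ≤
        K * (1 + n * b * ‖ξ‖) ^ (-(d + 1) : ℝ) := by
  obtain ⟨c, hc, upper⟩ := exists_pos_forall_mul_sq_norm_le_one_sub_re_ftOmega hω hmass hQ haper
  obtain ⟨ε, hε, lower⟩ := exists_pos_forall_neg_one_add_le_re_ftOmega hω hmass haper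
  have hd' : (1 : ℝ) ≤ d := by exact_mod_cast hd
  obtain ⟨K, hK⟩ := exists_forall_one_add_rpow_mul_sq_eval_jacobiPoly_le
    (by linarith : 1 / 2 ≤ (d : ℝ) / 2) hε
  refine ⟨K, √c, sqrt_pos.2 hc, fun n hn ξ hξ => ?_⟩
  set t := (ftOmega ω ξ).re
  have ht : t ∈ Set.Icc (-1 + ε) 1 :=
    ⟨lower ξ hξ, by linarith [upper ξ hξ, mul_nonneg hc.le (sq_nonneg ‖ξ‖)]⟩
  have norm_le : √c * ‖ξ‖ ≤ √(1 - t) := le_sqrt_of_sq_le <| by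
    rw [mul_pow, sq_sqrt hc.le]
    exact upper ξ hξ
  have hdn : 2 * ((d : ℝ) / 2) ≤ n := by rw [mul_div_cancel₀ _ two_ne_zero]; exact_mod_cast hn
  rw [rpow_neg (by positivity), ← div_eq_mul_inv, le_div_iff₀' (by positivity)]
  calc (1 + n * √c * ‖ξ‖) ^ ((d : ℝ) + 1) * (jacobiPoly (d / 2) n).eval t ^ 2
      ≤ (1 + n * √(1 - t)) ^ ((d : ℝ) + 1) * (jacobiPoly (d / 2) n).eval t ^ 2 := by
        rw [mul_assoc]
        gcongr
    _ ≤ K := by simpa [mul_div_cancel₀] using hK n hdn t ht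

theorem IsJacobiIteration.tsum_sq_isBigO {x : ℕ → (Fin d → ℤ) → ℝ}
    (hx : IsJacobiIteration ω x) (hd : 1 ≤ d) (hω : HasFiniteSupport ω)
    (hmass : ∑' v, ω v = 1) (hsymm : ∀ v, ω (-v) = ω v) (hQ : (covQ d ω).PosDef)
    (haper : ∀ ξ ∈ dualBox d, ξ ≠ 0 → ‖ftOmega ω ξ‖ < 1) :
    (fun n => ∑' v, x n v ^ 2) =O[atTop] fun n => ((n : ℝ) ^ d)⁻¹ := by
  obtain ⟨K, b, hb, decay⟩ :=
    exists_forall_sq_eval_jacobiPoly_re_ftOmega_le hd hω hmass hQ haper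
  set I : ℝ := ∫ ξ : Fin d → ℝ, (1 + ‖ξ‖) ^ (-(d + 1) : ℝ) with hI
  refine IsBigO.of_bound (K * (b ^ d)⁻¹ * I / (2 * π) ^ d) ?_
  filter_upwards [eventually_ge_atTop d] with n hn
  have hn0 : (0 : ℝ) < n := by exact_mod_cast hd.trans hn
  have dim : (Module.finrank ℝ (Fin d → ℝ) : ℝ) < d + 1 := by simp
  have integrable := (integrable_one_add_mul_norm volume dim (mul_pos hn0 hb)).const_mul K
  have hcont : Continuous fun ξ => (jacobiPoly (d / 2) n).eval (ftOmega ω ξ).re ^ 2 :=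
    ((jacobiPoly (d / 2) n).continuous.comp
      (Complex.continuous_re.comp (continuous_ftOmega hω))).pow 2
  have K_nonneg : 0 ≤ K := by
    have zero_mem : (0 : Fin d → ℝ) ∈ dualBox d := fun _ _ => ⟨by simp [pi_nonneg], pi_nonneg⟩
    simpa using (sq_nonneg _).trans (decay n hn 0 zero_mem)
  rw [norm_of_nonneg (tsum_nonneg fun v => sq_nonneg _), norm_of_nonneg (by positivity),
    div_mul_eq_mul_div, le_div_iff₀' (by positivity)]
  calc (2 * π) ^ d * ∑' v, x n v ^ 2
      = ∫ ξ in dualBox d, (jacobiPoly (d / 2) n).eval (ftOmega ω ξ).re ^ 2 :=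
        (hx.integral_sq_eval_jacobiPoly hω hsymm n).symm
    _ ≤ ∫ ξ in dualBox d, K * (1 + n * b * ‖ξ‖) ^ (-(d + 1) : ℝ) :=
        setIntegral_mono_on
          (hcont.continuousOn.integrableOn_compact (isCompact_dualBox d)) integrable.integrableOn
          (isCompact_dualBox d).measurableSet (decay n hn)
    _ ≤ ∫ ξ, K * (1 + n * b * ‖ξ‖) ^ (-(d + 1) : ℝ) :=
        setIntegral_le_integral integrable
          (.of_forall fun ξ => by dsimp only [Pi.zero_apply]; positivity)
    _ = K * (b ^ d)⁻¹ * I * ((n : ℝ) ^ d)⁻¹ := by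
        rw [integral_const_mul, integral_one_add_mul_norm volume (mul_pos hn0 hb), ← hI,
          Module.finrank_fin_fun, mul_pow, mul_inv]
        ring

end Decay

theorem jacobi_iteration_l2_bound_general
    (d : ℕ) (hd : 1 ≤ d) (ω : (Fin d → ℤ) → ℝ)
    (hfin : (Function.support ω).Finite)
    (hmass : ∑' v : Fin d → ℤ, ω v = 1) (hsymm : ∀ v, ω (-v) = ω v)
    (hQ : (covQ d ω).PosDef)
    (haper : ∀ ξ : Fin d → ℝ, (∀ i, ξ i ∈ Set.Icc (-π) π) → ξ ≠ 0 →
      ‖ftOmega ω ξ‖ < 1)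
    (x : ℕ → (Fin d → ℤ) → ℝ) (hx : IsJacobiIteration ω x) :
    ∃ C : ℝ, 0 < C ∧ ∀ n : ℕ, 1 ≤ n → ∑' v : Fin d → ℤ, (x n v) ^ 2 ≤ C / (n : ℝ) ^ d := by
  have isBigO := hx.tsum_sq_isBigO hd hfin hmass hsymm hQ
    fun ξ hξ => haper ξ fun i => hξ i (Set.mem_univ i)
  obtain ⟨C, hC, bound⟩ := Asymptotics.bound_of_isBigO_nat_atTop isBigO
  refine ⟨C, hC, fun n hn => ?_⟩
  have hn0 : (n : ℝ) ^ d ≠ 0 := pow_ne_zero d (Nat.cast_ne_zero.2 (by omega))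
  calc ∑' v, x n v ^ 2 ≤ ‖∑' v, x n v ^ 2‖ := le_norm_self _
    _ ≤ C * ‖((n : ℝ) ^ d)⁻¹‖ := bound (inv_ne_zero hn0)
    _ = C / (n : ℝ) ^ d := by rw [norm_of_nonneg (by positivity), div_eq_mul_inv]

/-- The squared ℓ² norm of the Jacobi polynomial iteration is O(n^{-d}). -/
theorem jacobi_iteration_l2_bound
    (d : ℕ) (hd : 1 ≤ d) (ω : (Fin d → ℤ) → ℝ)
    (hfin : (Function.support ω).Finite) (hnn : ∀ v, 0 ≤ ω v)
    (hmass : ∑' v : Fin d → ℤ, ω v = 1) (hsymm : ∀ v, ω (-v) = ω v)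
    (hQ : (covQ d ω).PosDef)
    (haper : ∀ ξ : Fin d → ℝ, (∀ i, ξ i ∈ Set.Icc (-π) π) → ξ ≠ 0 →
      ‖ftOmega ω ξ‖ < 1)
    (x : ℕ → (Fin d → ℤ) → ℝ)
    (hx0 : ∀ v, x 0 v = if v = 0 then 1 else 0)
    (hx1 : ∀ v, x 1 v = aCoef0 d * latticeConv ω (x 0) v + bCoef0 d * x 0 v)
    (hrec : ∀ n, 1 ≤ n → ∀ v,
      x (n + 1) v = aCoef d n * latticeConv ω (x n) v + bCoef d n * x n v - cCoef d n * x (n - 1) v) :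
    ∃ C : ℝ, 0 < C ∧ ∀ n : ℕ, 1 ≤ n → ∑' v : Fin d → ℤ, (x n v) ^ 2 ≤ C / (n : ℝ) ^ d := by
  exact jacobi_iteration_l2_bound_general d hd ω hfin hmass hsymm hQ haper x ⟨hx0, hx1, hrec⟩
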